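/- Suppose in addition that p(θ + π/2) = R(p(θ)) for all θ, where R(x, y) := (−y, x) is the rotation by π/2 (i.e., the unit circle of 𝒫 is invariant under a linear map B with B² = −Id). Then for every odd integer k ≥ 1 there exists λ > 0 such that every solution u of the cycloid equation (∗) with parameter λ satisfies u(θ + π) = −u(θ) for all θ (so all solutions are 2π-periodic and λ is a double eigenvalue), and every solution that is not identically zero has exactly 2k distinct zeros in [0, 2π). -/

import Mathlib

open Real MeasureTheory

noncomputable section

/-- Determinant of two plane vectors: `[a, b] = a₁b₂ − a₂b₁`. -/
def det2 (a b : ℝ × ℝ) : ℝ := a.1 * b.2 - a.2 * b.1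

/-- The dual parameterization `q(θ) = p′(θ)/[p(θ), p′(θ)]`. -/
def dualQ (p : ℝ → ℝ × ℝ) : ℝ → ℝ × ℝ :=
  fun θ => (det2 (p θ) (deriv p θ))⁻¹ • deriv p θ

/-- `p` is a smooth, symmetric, quadratically convex parameterization of the
unit circle of a normed plane, by the angle its tangent makes with a fixed direction. -/
def IsUnitCircle (p : ℝ → ℝ × ℝ) : Prop :=
  ContDiff ℝ (⊤ : ℕ∞) p ∧ (∀ θ, p (θ + π) = -p θ) ∧
  (∀ θ, 0 < det2 (p θ) (deriv p θ)) ∧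
  (∀ θ, 0 < det2 (deriv p θ) (deriv (deriv p) θ))

/-- `u` is a solution of the cycloid equation
`(1/[p,p'])·(u'/[q,q'])' = −λ·u` for the normed plane with unit circle `p`. -/
def IsCycloidSol (p : ℝ → ℝ × ℝ) (lam : ℝ) (u : ℝ → ℝ) : Prop :=
  ContDiff ℝ 2 u ∧
  ∀ θ, (det2 (p θ) (deriv p θ))⁻¹ *
      deriv (fun t => deriv u t / det2 (dualQ p t) (deriv (dualQ p) t)) θ = -lam * u θ

open Set Filter Topology

/-- Global existence for a bounded, Lipschitz, time-continuous scalar field. -/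
lemma glob_exists (f : ℝ → ℝ → ℝ) (K L : NNReal) (hK : ∀ t, LipschitzWith K (f t))
    (hc : ∀ x, Continuous (fun t => f t x)) (hL : ∀ t x, ‖f t x‖ ≤ L) (x0 : ℝ) :
    ∃ φ : ℝ → ℝ, φ 0 = x0 ∧ ∀ t, HasDerivAt φ (f t (φ t)) t := by
  have loc : ∀ n : ℕ, ∃ φ : ℝ → ℝ, φ 0 = x0 ∧
      ∀ t ∈ Ioo (-(n + 1 : ℝ)) (n + 1), HasDerivAt φ (f t (φ t)) t := by
    intro n
    have hn : (0:ℝ) ≤ n := n.cast_nonneg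
    have h0 : (0:ℝ) ∈ Icc (-(n + 1 : ℝ)) (n + 1) := ⟨by linarith, by linarith⟩
    have hPL : IsPicardLindelof f (tmin := -(n + 1 : ℝ)) (tmax := n + 1) ⟨0, h0⟩ x0
        (L * (n + 1)) 0 L K :=
      { lipschitzOnWith := fun t _ => (hK t).lipschitzOnWith
        continuousOn := fun x _ => (hc x).continuousOn
        norm_le := fun t _ x _ => hL t x
        mul_max_le := by simp }
    obtain ⟨φ, h1, h2⟩ := hPL.exists_eq_forall_mem_Icc_hasDerivWithinAt₀
    exact ⟨φ, h1, fun t ht => (h2 t (Ioo_subset_Icc_self ht)).hasDerivAt (Icc_mem_nhds ht.1 ht.2)⟩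
  choose φ h0 hd using loc
  have agree : ∀ m n : ℕ, m ≤ n → ∀ t ∈ Ioo (-(m + 1 : ℝ)) (m + 1), φ m t = φ n t := by
    intro m n hmn t ht
    have hm : (0:ℝ) ≤ m := m.cast_nonneg
    have hmn' : (m:ℝ) ≤ n := by exact_mod_cast hmn
    refine ODE_solution_unique_of_mem_Ioo (v := f) (s := fun _ => univ) (K := K) (t₀ := 0)
      (a := -(m + 1 : ℝ)) (b := m + 1)
      (fun t _ => (hK t).lipschitzOnWith) ⟨by linarith, by linarith⟩
      (fun t ht => ⟨hd m t ht, trivial⟩)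
      (fun t ht => ⟨hd n t ⟨by linarith [ht.1], by linarith [ht.2]⟩, trivial⟩)
      (by rw [h0, h0]) ht
  refine ⟨fun t => φ ⌈|t|⌉₊ t, by simp [h0], fun t => ?_⟩
  set N := ⌈|t|⌉₊ + 1
  have hmem : ∀ s : ℝ, s ∈ Ioo (-(⌈|s|⌉₊ + 1 : ℝ)) (⌈|s|⌉₊ + 1) := by
    intro s
    have := Nat.le_ceil |s|
    have := abs_lt.mp (show |s| < ⌈|s|⌉₊ + 1 by linarith)
    exact this
  have hev : (fun s => φ ⌈|s|⌉₊ s) =ᶠ[𝓝 t] φ N := by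
    have : ∀ᶠ s in 𝓝 t, |s| < |t| + 1 :=
      (continuous_abs.tendsto t).eventually (gt_mem_nhds (by linarith))
    filter_upwards [this] with s hs
    refine agree _ _ ?_ s (hmem s)
    apply Nat.ceil_le.mpr
    have := Nat.le_ceil |t|
    push_cast [N]; linarith
  have ht : φ ⌈|t|⌉₊ t = φ N t := hev.self_of_nhds
  have := hd N t ⟨by have := (hmem t).1; push_cast [N]; linarith,
    by have := (hmem t).2; push_cast [N]; linarith⟩
  simp only [ht]
  exact this.congr_of_eventuallyEq hev

/-- coefficient hypotheses -/
structure Coef (a b : ℝ → ℝ) (T a0 b0 C : ℝ) : Prop where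
  ca : Continuous a
  cb : Continuous b
  a0p : 0 < a0
  b0p : 0 < b0
  a0a : ∀ t, a0 ≤ a t
  b0b : ∀ t, b0 ≤ b t
  aC : ∀ t, a t ≤ C
  bC : ∀ t, b t ≤ C
  Tp : 0 < T
  pa : ∀ t, a (t + T) = a t
  pb : ∀ t, b (t + T) = b t

/-- linear system -/
def LSol (a b : ℝ → ℝ) (lam : ℝ) (u v : ℝ → ℝ) : Prop :=
  ∀ t, HasDerivAt u (b t * v t) t ∧ HasDerivAt v (-lam * a t * u t) t

/-- Pruefer field -/
def prF (a b : ℝ → ℝ) (lam t x : ℝ) : ℝ := b t * cos x ^ 2 + lam * a t * sin x ^ 2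

/-- Pruefer angle solution -/
def PSol (a b : ℝ → ℝ) (lam : ℝ) (φ : ℝ → ℝ) : Prop := ∀ t, HasDerivAt φ (prF a b lam t (φ t)) t

variable {a b : ℝ → ℝ} {T a0 b0 C : ℝ}

lemma Coef.Cp (h : Coef a b T a0 b0 C) : 0 < C := by
  linarith [h.a0p, h.a0a 0, h.aC 0]

lemma Coef.ap (h : Coef a b T a0 b0 C) (t : ℝ) : 0 < a t := by
  linarith [h.a0p, h.a0a t]

lemma Coef.bp (h : Coef a b T a0 b0 C) (t : ℝ) : 0 < b t := by
  linarith [h.b0p, h.b0b t]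

/-- Lipschitz constant -/
def KK (C lam : ℝ) : NNReal := Real.toNNReal (2 * C + 2 * |lam| * C)

lemma Coef.lip (h : Coef a b T a0 b0 C) (lam t : ℝ) :
    LipschitzWith (KK C lam) (prF a b lam t) := by
  have hC := h.Cp
  refine LipschitzWith.of_dist_le_mul fun x y => ?_
  have h1 : |cos x - cos y| ≤ |x - y| := by
    simpa [Real.dist_eq] using Real.lipschitzWith_cos.dist_le_mul x y
  have h2 : |cos x + cos y| ≤ 2 := by
    rw [abs_le]; constructor <;> linarith [neg_one_le_cos x, cos_le_one x, neg_one_le_cos y, cos_le_one y]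
  have h3 : |cos x ^ 2 - cos y ^ 2| ≤ 2 * |x - y| := by
    rw [show cos x ^ 2 - cos y ^ 2 = (cos x + cos y) * (cos x - cos y) by ring, abs_mul]
    exact mul_le_mul h2 h1 (abs_nonneg _) (by norm_num)
  have h4 : prF a b lam t x - prF a b lam t y = (b t - lam * a t) * (cos x ^ 2 - cos y ^ 2) := by
    unfold prF; rw [sin_sq, sin_sq]; ring
  have h5 : |b t - lam * a t| ≤ C + |lam| * C := by
    refine (abs_sub _ _).trans ?_
    rw [abs_mul, abs_of_pos (h.bp t), abs_of_pos (h.ap t)]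
    have := mul_le_mul_of_nonneg_left (h.aC t) (abs_nonneg lam)
    linarith [h.bC t]
  rw [Real.dist_eq, Real.dist_eq, h4, abs_mul, KK, Real.coe_toNNReal _ (by positivity)]
  calc _ ≤ (C + |lam| * C) * (2 * |x - y|) := by gcongr
    _ = _ := by ring

lemma Coef.bdd (h : Coef a b T a0 b0 C) (lam t x : ℝ) :
    ‖prF a b lam t x‖ ≤ KK C lam := by
  have hC := h.Cp
  rw [KK, Real.coe_toNNReal _ (by positivity), Real.norm_eq_abs, prF]
  refine (abs_add_le _ _).trans ?_
  rw [abs_mul, abs_mul, abs_mul, abs_of_pos (h.bp t), abs_of_pos (h.ap t),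
    abs_of_nonneg (sq_nonneg (cos x)), abs_of_nonneg (sq_nonneg (sin x))]
  have h1 : b t * cos x ^ 2 ≤ C * 1 := by
    have := cos_sq_le_one x; have := h.bC t; gcongr
  have h2 : |lam| * a t * sin x ^ 2 ≤ |lam| * C * 1 := by
    have := sin_sq_le_one x; have := h.aC t; have := (h.ap t).le; gcongr
  have : 0 ≤ |lam| * C := by positivity
  linarith

lemma Coef.exP (h : Coef a b T a0 b0 C) (lam x : ℝ) : ∃ φ, φ 0 = x ∧ PSol a b lam φ := by
  refine glob_exists (prF a b lam) _ _ (h.lip lam) (fun x => ?_) (h.bdd lam) x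
  have := h.ca
  have := h.cb
  unfold prF
  fun_prop

lemma Coef.uniqP (h : Coef a b T a0 b0 C) {lam : ℝ} {φ ψ : ℝ → ℝ} (h1 : PSol a b lam φ)
    (h2 : PSol a b lam ψ) (t0 : ℝ) (he : φ t0 = ψ t0) : φ = ψ :=
  ODE_solution_unique_univ (v := prF a b lam) (s := fun _ => univ)
    (fun t => (h.lip lam t).lipschitzOnWith) (fun t => ⟨h1 t, trivial⟩)
    (fun t => ⟨h2 t, trivial⟩) he

lemma PSol.cont {lam : ℝ} {φ : ℝ → ℝ} (h1 : PSol a b lam φ) : Continuous φ :=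
  continuous_iff_continuousAt.mpr fun t => (h1 t).continuousAt

lemma Coef.ltP (h : Coef a b T a0 b0 C) {lam : ℝ} {φ ψ : ℝ → ℝ} (h1 : PSol a b lam φ)
    (h2 : PSol a b lam ψ) (t0 t : ℝ) (he : φ t0 < ψ t0) : φ t < ψ t := by
  by_contra! hc
  have : (0:ℝ) ∈ range (fun s => φ s - ψ s) := by
    have := mem_range_of_exists_le_of_exists_ge (h1.cont.sub h2.cont)
      (c := 0) ⟨t0, by simp; linarith⟩ ⟨t, by simp; linarith⟩
    exact this
  obtain ⟨s, hs⟩ := this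
  have := h.uniqP h1 h2 s (by simp at hs; linarith)
  rw [this] at he; exact lt_irrefl _ he

lemma Coef.leP (h : Coef a b T a0 b0 C) {lam : ℝ} {φ ψ : ℝ → ℝ} (h1 : PSol a b lam φ)
    (h2 : PSol a b lam ψ) (t0 t : ℝ) (he : φ t0 ≤ ψ t0) : φ t ≤ ψ t := by
  by_contra! hc
  exact absurd (h.ltP h2 h1 t t0 hc) (not_lt.mpr he)

lemma Coef.monoP (h : Coef a b T a0 b0 C) {lam : ℝ} (hl : 0 < lam) {φ : ℝ → ℝ}
    (h1 : PSol a b lam φ) : StrictMono φ := by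
  refine strictMono_of_deriv_pos fun t => ?_
  rw [(h1 t).deriv, prF]
  have ha := h.ap t
  have hb := h.bp t
  have h3 := sin_sq_add_cos_sq (φ t)
  rcases eq_or_ne (sin (φ t)) 0 with h0 | h0
  · rw [h0] at h3 ⊢
    have : cos (φ t) ^ 2 = 1 := by linarith
    rw [this]; simpa using hb
  · have : 0 < sin (φ t) ^ 2 := by positivity
    positivity

lemma PSol.add_int {lam : ℝ} {φ : ℝ → ℝ} (h1 : PSol a b lam φ) (n : ℤ) :
    PSol a b lam (fun t => φ t + n * π) := by
  intro t
  refine ((h1 t).add_const (n * π)).congr_deriv ?_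
  have e1 : cos (φ t + n * π) ^ 2 = cos (φ t) ^ 2 := by
    rw [cos_add_int_mul_pi, mul_pow, ← zpow_natCast, ← zpow_mul, mul_comm n, zpow_mul]; simp
  rw [prF, prF, sin_sq, sin_sq, e1]

lemma PSol.shift {lam : ℝ} {φ : ℝ → ℝ} (h1 : PSol a b lam φ) (h : Coef a b T a0 b0 C) :
    PSol a b lam (fun t => φ (t + T)) := by
  intro t
  refine ((h1 (t + T)).comp_add_const t T).congr_deriv ?_
  simp only [prF, h.pa, h.pb]

/-- continuity in lam -/
lemma Coef.contLam (h : Coef a b T a0 b0 C) (Φ : ℝ → ℝ → ℝ) (h0 : ∀ l, Φ l 0 = 0)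
    (hs : ∀ l, PSol a b l (Φ l)) (S : ℝ) (hS : 0 ≤ S) : Continuous (fun l => Φ l S) := by
  rw [continuous_iff_continuousAt]
  intro l
  have key : ∀ m, dist (Φ m S) (Φ l S) ≤ gronwallBound 0 (KK C l) (|m - l| * C) S := by
    intro m
    have := dist_le_of_approx_trajectories_ODE (v := prF a b l) (K := KK C l) (a := 0) (b := S)
      (δ := 0) (εf := |m - l| * C) (εg := 0) (f := Φ m) (g := Φ l)
      (f' := fun t => prF a b m t (Φ m t)) (g' := fun t => prF a b l t (Φ l t))
      (h.lip l) (hs m).cont.continuousOn (fun t _ => (hs m t).hasDerivWithinAt)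
      (fun t _ => by
        rw [Real.dist_eq, show prF a b m t (Φ m t) - prF a b l t (Φ m t)
          = (m - l) * (a t * sin (Φ m t) ^ 2) by unfold prF; ring, abs_mul]
        gcongr
        have := sin_sq_le_one (Φ m t)
        have h3 := h.ap t
        rw [abs_of_nonneg (by positivity)]
        nlinarith [h.aC t])
      (hs l).cont.continuousOn (fun t _ => (hs l t).hasDerivWithinAt)
      (fun t _ => by simp) (by simp [h0]) S ⟨hS, le_rfl⟩
    simpa using this
  have hlim : Tendsto (fun m => gronwallBound 0 (KK C l) (|m - l| * C) S) (𝓝 l) (𝓝 0) := by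
    have h1 : Continuous (fun m => gronwallBound 0 (KK C l) (|m - l| * C) S) :=
      (gronwallBound_continuous_ε 0 (KK C l) S).comp (by fun_prop)
    have := h1.tendsto l
    simpa [gronwallBound_ε0_δ0] using this
  rw [ContinuousAt, tendsto_iff_dist_tendsto_zero]
  exact squeeze_zero (fun _ => dist_nonneg) key hlim

lemma Coef.lamZero (h : Coef a b T a0 b0 C) {φ : ℝ → ℝ} (h1 : PSol a b 0 φ) (h0 : φ 0 = 0)
    (S : ℝ) : φ S < π / 2 := by
  have hc : PSol a b 0 (fun _ => π / 2) := by
    intro t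
    have : prF a b 0 t (π / 2) = 0 := by simp [prF]
    simp only [this]
    exact hasDerivAt_const _ _
  exact h.ltP h1 hc 0 S (by rw [h0]; positivity)

/-- lower bound -/
lemma Coef.lamLarge (h : Coef a b T a0 b0 C) (s : ℝ) (hs : 0 < s) {φ : ℝ → ℝ}
    (h1 : PSol a b (s ^ 2 * b0 / a0) φ) (h0 : φ 0 = 0)
    (S : ℝ) (hS : 0 ≤ S) : s * b0 * S - π / 2 ≤ φ S := by
  have ha0 := h.a0p
  have hb0 := h.b0p
  let G : ℝ → ℝ := fun x => x + arctan (((s - 1) * (sin x * cos x)) / (cos x ^ 2 + s * sin x ^ 2))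
  have hE : ∀ x, 0 < cos x ^ 2 + s ^ 2 * sin x ^ 2 := by
    intro x
    have h3 := sin_sq_add_cos_sq x
    rcases eq_or_ne (sin x) 0 with h | h
    · rw [h] at h3 ⊢; norm_num at h3 ⊢; rcases h3 with h3 | h3 <;> rw [h3] <;> norm_num
    · have : 0 < sin x ^ 2 := by positivity
      positivity
  have hD : ∀ x, 0 < cos x ^ 2 + s * sin x ^ 2 := by
    intro x
    have h3 := sin_sq_add_cos_sq x
    rcases eq_or_ne (sin x) 0 with h | h
    · rw [h] at h3 ⊢; norm_num at h3 ⊢; rcases h3 with h3 | h3 <;> rw [h3] <;> norm_num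
    · have : 0 < sin x ^ 2 := by positivity
      positivity
  have hG : ∀ x, HasDerivAt G (s / (cos x ^ 2 + s ^ 2 * sin x ^ 2)) x := by
    intro x
    have e1 : HasDerivAt (fun x => (s - 1) * (sin x * cos x))
        ((s - 1) * (cos x * cos x + sin x * (-sin x))) x :=
      ((hasDerivAt_sin x).mul (hasDerivAt_cos x)).const_mul _
    have e2 : HasDerivAt (fun x => cos x ^ 2 + s * sin x ^ 2)
        (2 * cos x * (-sin x) + s * (2 * sin x * cos x)) x := by
      have := ((hasDerivAt_cos x).pow 2).add (((hasDerivAt_sin x).pow 2).const_mul s)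
      refine this.congr_deriv ?_
      simp
    have e3 := (hasDerivAt_id x).add ((e1.div e2 (hD x).ne').arctan)
    refine e3.congr_deriv ?_
    have hD' := (hD x).ne'
    have hE' := (hE x).ne'
    have hsum : (cos x ^ 2 + s * sin x ^ 2) ^ 2 + ((s - 1) * (sin x * cos x)) ^ 2
        = cos x ^ 2 + s ^ 2 * sin x ^ 2 := by
      rw [cos_sq']
      ring_nf
      rw [show cos x ^ 2 = 1 - sin x ^ 2 from cos_sq' x]
      ring
    have h2 : 1 + ((s - 1) * (sin x * cos x) / (cos x ^ 2 + s * sin x ^ 2)) ^ 2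
        = (cos x ^ 2 + s ^ 2 * sin x ^ 2) / (cos x ^ 2 + s * sin x ^ 2) ^ 2 := by
      rw [← hsum]; field_simp
    simp only [Pi.div_apply]
    rw [h2]
    field_simp
    ring_nf
    simp only [show cos x ^ 4 = (cos x ^ 2) ^ 2 by ring, show cos x ^ 2 = 1 - sin x ^ 2 from cos_sq' x]
    ring
  have hmono : Monotone (fun t => G (φ t) - s * b0 * t) := by
    have hd : ∀ t, HasDerivAt (fun t => G (φ t) - s * b0 * t)
        (s / (cos (φ t) ^ 2 + s ^ 2 * sin (φ t) ^ 2) * prF a b (s ^ 2 * b0 / a0) t (φ t)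
          - s * b0) t := by
      intro t
      have := ((hG (φ t)).comp t (h1 t)).sub ((hasDerivAt_id t).const_mul (s * b0))
      exact this.congr_deriv (by simp)
    refine monotone_of_deriv_nonneg (fun t => (hd t).differentiableAt) fun t => ?_
    rw [(hd t).deriv]
    have hEt := hE (φ t)
    have h3 : b0 * (cos (φ t) ^ 2 + s ^ 2 * sin (φ t) ^ 2) ≤ prF a b (s ^ 2 * b0 / a0) t (φ t) := by
      unfold prF
      have e1 : b0 * cos (φ t) ^ 2 ≤ b t * cos (φ t) ^ 2 := by
        have := h.b0b t; gcongr
      have e2 : s ^ 2 * b0 / a0 * a0 * sin (φ t) ^ 2 ≤ s ^ 2 * b0 / a0 * a t * sin (φ t) ^ 2 := by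
        have := h.a0a t; gcongr
      have e3 : s ^ 2 * b0 / a0 * a0 = s ^ 2 * b0 := by field_simp
      rw [e3] at e2
      linarith
    rw [sub_nonneg, div_mul_eq_mul_div, le_div_iff₀ hEt]
    calc s * b0 * (cos (φ t) ^ 2 + s ^ 2 * sin (φ t) ^ 2)
        = s * (b0 * (cos (φ t) ^ 2 + s ^ 2 * sin (φ t) ^ 2)) := by ring
      _ ≤ _ := by gcongr
  have := hmono hS
  simp only [h0, G] at this
  simp at this
  have h4 := arctan_lt_pi_div_two
    (((s - 1) * (sin (φ S) * cos (φ S))) / (cos (φ S) ^ 2 + s * sin (φ S) ^ 2))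
  linarith

lemma Coef.exLam (h : Coef a b T a0 b0 C) (k : ℕ) (hk : 1 ≤ k) :
    ∃ lam, 0 < lam ∧ ∃ φ, φ 0 = 0 ∧ PSol a b lam φ ∧ φ (T + T) = k * π := by
  choose Φ h0 hs using fun l => h.exP l 0
  have hT := h.Tp
  have hk' : (1:ℝ) ≤ k := by exact_mod_cast hk
  have ha0 := h.a0p
  have hb0 := h.b0p
  have hpi := pi_pos
  have hc := h.contLam Φ h0 hs (T + T) (by linarith)
  set s : ℝ := (k * π + π / 2) / (b0 * (T + T)) with hsdef
  have hsp : 0 < s := by positivity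
  have hL := h.lamLarge s hsp (hs _) (h0 _) (T + T) (by linarith)
  have e : s * b0 * (T + T) = k * π + π / 2 := by rw [hsdef]; field_simp
  have hZ := h.lamZero (hs 0) (h0 0) (T + T)
  have hle : (0:ℝ) ≤ s ^ 2 * b0 / a0 := by positivity
  have hkp : π ≤ k * π := by nlinarith
  obtain ⟨l, hl, hl2⟩ := intermediate_value_Icc hle hc.continuousOn
    (show (k * π : ℝ) ∈ Icc (Φ 0 (T + T)) (Φ (s ^ 2 * b0 / a0) (T + T)) from
      ⟨by linarith, by linarith⟩)
  refine ⟨l, lt_of_le_of_ne hl.1 ?_, Φ l, h0 l, hs l, hl2⟩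
  rintro rfl
  simp only at hl2
  linarith

lemma Coef.uniqL (h : Coef a b T a0 b0 C) {lam : ℝ} {u v u' v' : ℝ → ℝ} (h1 : LSol a b lam u v)
    (h2 : LSol a b lam u' v') (t0 : ℝ) (hu : u t0 = u' t0) (hv : v t0 = v' t0) :
    u = u' ∧ v = v' := by
  have hC := h.Cp
  have hlip : ∀ t, LipschitzWith (Real.toNNReal (C + |lam| * C))
      (fun x : ℝ × ℝ => ((b t * x.2, -lam * a t * x.1) : ℝ × ℝ)) := by
    intro t
    refine LipschitzWith.of_dist_le_mul fun x y => ?_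
    rw [Real.coe_toNNReal _ (by positivity)]
    have d1 : |x.1 - y.1| ≤ dist x y := by
      rw [Prod.dist_eq]; exact le_max_left _ _
    have d2 : |x.2 - y.2| ≤ dist x y := by
      rw [Prod.dist_eq]; exact le_max_right _ _
    have hd : 0 ≤ dist x y := dist_nonneg
    have e0 : 0 ≤ |lam| * C := by positivity
    conv_lhs => rw [Prod.dist_eq]
    refine max_le ?_ ?_
    · simp only [Real.dist_eq]
      rw [← mul_sub, abs_mul, abs_of_pos (h.bp t)]
      have := h.bC t
      calc b t * |x.2 - y.2| ≤ C * dist x y := by gcongr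
        _ ≤ _ := by nlinarith
    · simp only [Real.dist_eq]
      rw [← mul_sub, abs_mul, abs_mul, abs_neg, abs_of_pos (h.ap t)]
      have := h.aC t
      calc |lam| * a t * |x.1 - y.1| ≤ |lam| * C * dist x y := by gcongr
        _ ≤ _ := by nlinarith
  have := ODE_solution_unique_univ
    (v := fun t (x : ℝ × ℝ) => ((b t * x.2, -lam * a t * x.1) : ℝ × ℝ))
    (s := fun _ => univ) (f := fun t => (u t, v t)) (g := fun t => (u' t, v' t)) (t₀ := t0)
    (fun t => (hlip t).lipschitzOnWith)
    (fun t => ⟨(h1 t).1.prodMk (h1 t).2, trivial⟩)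
    (fun t => ⟨(h2 t).1.prodMk (h2 t).2, trivial⟩) (by simp [hu, hv])
  constructor <;> ext t
  · exact congrArg Prod.fst (congrFun this t)
  · exact congrArg Prod.snd (congrFun this t)

lemma LSol.comb {lam : ℝ} {u v u' v' : ℝ → ℝ} (h1 : LSol a b lam u v)
    (h2 : LSol a b lam u' v') (c d : ℝ) :
    LSol a b lam (fun t => c * u t + d * u' t) (fun t => c * v t + d * v' t) := by
  intro t
  constructor
  · exact (((h1 t).1.const_mul c).add ((h2 t).1.const_mul d)).congr_deriv (by ring)
  · exact (((h1 t).2.const_mul c).add ((h2 t).2.const_mul d)).congr_deriv (by ring)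

lemma LSol.smul {lam : ℝ} {u v : ℝ → ℝ} (h1 : LSol a b lam u v) (c : ℝ) :
    LSol a b lam (fun t => c * u t) (fun t => c * v t) := by
  intro t
  constructor
  · exact ((h1 t).1.const_mul c).congr_deriv (by ring)
  · exact ((h1 t).2.const_mul c).congr_deriv (by ring)

lemma LSol.shift {lam : ℝ} {u v : ℝ → ℝ} (h1 : LSol a b lam u v) (h : Coef a b T a0 b0 C) :
    LSol a b lam (fun t => u (t + T)) (fun t => v (t + T)) := by
  intro t
  constructor
  · exact ((h1 (t + T)).1.comp_add_const t T).congr_deriv (by simp only [h.pb])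
  · exact ((h1 (t + T)).2.comp_add_const t T).congr_deriv (by simp only [h.pa])

lemma LSol.wronsk {lam : ℝ} {u v u' v' : ℝ → ℝ} (h1 : LSol a b lam u v)
    (h2 : LSol a b lam u' v') (t s : ℝ) :
    u t * v' t - v t * u' t = u s * v' s - v s * u' s := by
  have hd : ∀ t, HasDerivAt (fun t => u t * v' t - v t * u' t) 0 t := fun t =>
    (((h1 t).1.mul (h2 t).2).sub ((h1 t).2.mul (h2 t).1)).congr_deriv (by ring)
  exact is_const_of_deriv_eq_zero (fun t => (hd t).differentiableAt) (fun t => (hd t).deriv) t s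

lemma PSol.toL (h : Coef a b T a0 b0 C) {lam : ℝ} {φ : ℝ → ℝ} (h1 : PSol a b lam φ) :
    ∃ r : ℝ → ℝ, r 0 = 1 ∧ (∀ t, 0 < r t) ∧
      LSol a b lam (fun t => r t * sin (φ t)) (fun t => r t * cos (φ t)) := by
  let g : ℝ → ℝ := fun t => (b t - lam * a t) * (sin (φ t) * cos (φ t))
  have hg : Continuous g := by
    have := h.ca
    have := h.cb
    have := h1.cont
    fun_prop
  refine ⟨fun t => exp (∫ s in (0:ℝ)..t, g s), by simp, fun t => exp_pos _, fun t => ?_⟩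
  have hr : HasDerivAt (fun t => exp (∫ s in (0:ℝ)..t, g s))
      (exp (∫ s in (0:ℝ)..t, g s) * g t) t := (hg.integral_hasStrictDerivAt 0 t).hasDerivAt.exp
  have h3 : sin (φ t) ^ 2 = 1 - cos (φ t) ^ 2 := sin_sq _
  constructor
  · refine (hr.mul (h1 t).sin).congr_deriv ?_
    simp only [g, prF]
    linear_combination (exp (∫ s in (0:ℝ)..t, g s) * b t * cos (φ t)) * h3
  · refine (hr.mul (h1 t).cos).congr_deriv ?_
    simp only [g, prF]
    linear_combination (-exp (∫ s in (0:ℝ)..t, g s) * lam * a t * sin (φ t)) * h3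

lemma LSol.toP (h : Coef a b T a0 b0 C) {lam : ℝ} {u v : ℝ → ℝ} (h1 : LSol a b lam u v)
    (hne : ¬ (u 0 = 0 ∧ v 0 = 0)) :
    ∃ r φ : ℝ → ℝ, PSol a b lam φ ∧ (∀ t, 0 < r t) ∧ (∀ t, u t = r t * sin (φ t)) ∧
      ∀ t, v t = r t * cos (φ t) := by
  set z : ℂ := ⟨v 0, u 0⟩ with hz
  have hz0 : z ≠ 0 := by
    intro hh
    apply hne
    exact ⟨by simpa [hz] using congrArg Complex.im hh, by simpa [hz] using congrArg Complex.re hh⟩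
  obtain ⟨φ, hφ0, hφ⟩ := h.exP lam z.arg
  obtain ⟨r, hr0, hrp, hL⟩ := hφ.toL h
  have := h.uniqL h1 (hL.smul ‖z‖) 0
    (by simp only [hφ0, hr0, one_mul]; rw [Complex.norm_mul_sin_arg])
    (by simp only [hφ0, hr0, one_mul]; rw [Complex.norm_mul_cos_arg])
  refine ⟨fun t => ‖z‖ * r t, φ, hφ, fun t => mul_pos (norm_pos_iff.mpr hz0) (hrp t),
    fun t => ?_, fun t => ?_⟩
  · rw [this.1]; ring
  · rw [this.2]; ring

/-- All solutions are anti-periodic. -/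
lemma Coef.anti (h : Coef a b T a0 b0 C) {k : ℕ} (hodd : Odd k) {lam : ℝ} {φ : ℝ → ℝ}
    (h0 : φ 0 = 0) (hφ : PSol a b lam φ) (hk : φ (T + T) = k * π) {u v : ℝ → ℝ}
    (hu : LSol a b lam u v) : ∀ t, u (t + (T + T)) = - u t ∧ v (t + (T + T)) = - v t := by
  obtain ⟨r, hr0, hrp, hL⟩ := hφ.toL h
  set e : ℝ → ℝ := fun t => r t * sin (φ t) with he
  set f : ℝ → ℝ := fun t => r t * cos (φ t) with hf
  have e0 : e 0 = 0 := by simp [he, h0]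
  have f0 : f 0 = 1 := by simp [hf, h0, hr0]
  set c := r (T + T) with hc
  have hcp : 0 < c := hrp _
  have e2 : e (T + T) = 0 := by simp [he, hk]
  have f2 : f (T + T) = -c := by
    simp only [hf, hk]
    rw [cos_nat_mul_pi, hodd.neg_one_pow]; ring
  have hL1 := hL.shift h
  have hL2 := hL1.shift h
  have E2 := h.uniqL hL2 (hL.smul (-c)) 0 (by simp [e0, e2]) (by simp [f0, f2])
  have E2e : ∀ t, e (t + T + T) = -c * e t := fun t => congrFun E2.1 t
  have E2f : ∀ t, f (t + T + T) = -c * f t := fun t => congrFun E2.2 t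
  have hW := hL.wronsk hL1 0 T
  simp only [e0, f0] at hW
  have q1 := E2e 0
  have q2 := E2f 0
  simp only [zero_add] at q1 q2 hW
  rw [q1, q2, e0, f0] at hW
  -- hW : -e T = c * ...
  have heT : e T ≠ 0 := by
    intro hz
    have E1 := h.uniqL hL1 (hL.smul (f T)) 0 (by simp [e0, hz]) (by simp [f0])
    have := congrFun E1.2 T
    rw [f2] at this
    nlinarith [mul_self_nonneg (f T)]
  have hc1 : c = 1 := by
    have : e T * (c - 1) = 0 := by linarith
    rcases mul_eq_zero.mp this with h | h
    · exact absurd h heT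
    · linarith
  rw [hc1] at E2e E2f
  have key := h.uniqL hu (hL.comb hL1 (v 0 - u 0 / e T * f T) (u 0 / e T)) 0
    (by simp [e0, heT]) (by simp [f0])
  intro t
  have k1 := congrFun key.1
  have k2 := congrFun key.2
  have g1 := E2e t
  have g2 := E2f t
  have g3 := E2e (t + T)
  have g4 := E2f (t + T)
  have m1 := k1 (t + T + T)
  have m2 := k2 (t + T + T)
  rw [g1, show t + T + T + T = (t + T) + T + T by ring, g3] at m1
  rw [g2, show t + T + T + T = (t + T) + T + T by ring, g4] at m2
  rw [← add_assoc]
  constructor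
  · linear_combination m1 + k1 t
  · linear_combination m2 + k2 t

lemma Coef.advance (h : Coef a b T a0 b0 C) {k : ℕ} (hodd : Odd k) {lam : ℝ} {φ : ℝ → ℝ}
    (h0 : φ 0 = 0) (hφ : PSol a b lam φ) (hk : φ (T + T) = k * π) {ψ : ℝ → ℝ}
    (hψ : PSol a b lam ψ) : ψ (T + T) = ψ 0 + k * π := by
  obtain ⟨r, hr0, hrp, hL⟩ := hψ.toL h
  have hA := h.anti hodd h0 hφ hk hL 0
  simp only [zero_add, hr0, one_mul] at hA
  have hs : sin (ψ (T + T) - ψ 0) = 0 := by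
    rw [sin_sub]
    have hr := (hrp (T + T)).ne'
    have : r (T + T) * (sin (ψ (T + T)) * cos (ψ 0) - cos (ψ (T + T)) * sin (ψ 0)) = 0 := by
      linear_combination cos (ψ 0) * hA.1 - sin (ψ 0) * hA.2
    exact (mul_eq_zero.mp this).resolve_left hr
  obtain ⟨j, hj⟩ := sin_eq_zero_iff.mp hs
  set n := ⌊ψ 0 / π⌋ with hn
  have hpi := pi_pos
  have n1 : n * π ≤ ψ 0 := by
    rw [← le_div_iff₀ hpi]; exact Int.floor_le _
  have n2 : ψ 0 < (n + 1) * π := by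
    rw [← div_lt_iff₀ hpi]; exact Int.lt_floor_add_one _
  have l1 := h.leP (hφ.add_int n) hψ 0 (T + T) (by simpa [h0] using n1)
  have l2 := h.ltP hψ (hφ.add_int (n + 1)) 0 (T + T) (by simpa [h0] using n2)
  simp only [hk] at l1 l2
  push_cast at l2
  have j1 : ((k:ℝ) - 1) < j := by
    by_contra! hh
    have := mul_le_mul_of_nonneg_right hh hpi.le
    linarith
  have j2 : (j:ℝ) < k + 1 := by
    by_contra! hh
    have := mul_le_mul_of_nonneg_right hh hpi.le
    linarith
  have j1' : (k:ℤ) - 1 < j := by exact_mod_cast j1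
  have j2' : j < (k:ℤ) + 1 := by exact_mod_cast j2
  have : j = k := by omega
  rw [this] at hj
  push_cast at hj
  linarith

lemma count_zeros {φ : ℝ → ℝ} (hc : Continuous φ) (hm : StrictMono φ) (S : ℝ) (hS : 0 ≤ S) (N : ℕ)
    (hN : φ S = φ 0 + N * π) : {t ∈ Ico (0:ℝ) S | sin (φ t) = 0}.ncard = N := by
  have hpi := pi_pos
  set m := ⌈φ 0 / π⌉ with hmdef
  have himg : (fun t => φ t) '' {t ∈ Ico (0:ℝ) S | sin (φ t) = 0}
      = (fun n : ℤ => (n:ℝ) * π) '' (↑(Finset.Ico m (m + N)) : Set ℤ) := by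
    have hiff : ∀ n : ℤ, (φ 0 ≤ n * π ∧ n * π < φ S) ↔ (m ≤ n ∧ n < m + N) := by
      intro n
      rw [hmdef, Int.ceil_le, div_le_iff₀ hpi]
      refine and_congr Iff.rfl ?_
      rw [← sub_lt_iff_lt_add, Int.lt_ceil, lt_div_iff₀ hpi, hN]
      push_cast
      constructor <;> intro h <;> linarith
    ext y
    constructor
    · rintro ⟨t, ⟨⟨ht1, ht2⟩, hs⟩, rfl⟩
      obtain ⟨n, hn⟩ := sin_eq_zero_iff.mp hs
      refine ⟨n, ?_, hn⟩
      simp only [Finset.coe_Ico, mem_Ico]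
      rw [← hiff]
      rw [hn]
      exact ⟨hm.monotone ht1, hm ht2⟩
    · rintro ⟨n, hn, rfl⟩
      simp only [Finset.coe_Ico, mem_Ico] at hn
      rw [← hiff] at hn
      obtain ⟨t, ht, htn⟩ := intermediate_value_Icc hS hc.continuousOn ⟨hn.1, hn.2.le⟩
      refine ⟨t, ⟨⟨ht.1, ?_⟩, ?_⟩, htn⟩
      · rw [← hm.lt_iff_lt, htn]; exact hn.2
      · rw [htn]; exact sin_int_mul_pi n
  have h1 := ncard_image_of_injective {t ∈ Ico (0:ℝ) S | sin (φ t) = 0} hm.injective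
  have h2 := ncard_image_of_injective (↑(Finset.Ico m (m + N)) : Set ℤ)
    (f := fun n : ℤ => (n:ℝ) * π) (by
      intro x y hxy
      simpa [hpi.ne'] using hxy)
  rw [← h1, himg, h2, ncard_coe_finset]
  simp

lemma Coef.main (h : Coef a b T a0 b0 C) (k : ℕ) (hodd : Odd k) (hk : 1 ≤ k) :
    ∃ lam, 0 < lam ∧ (∀ u v, LSol a b lam u v → ∀ t, u (t + (T + T)) = - u t) ∧
      ∀ u v, LSol a b lam u v → u ≠ 0 →
        {t ∈ Ico (0:ℝ) (T + T + (T + T)) | u t = 0}.ncard = 2 * k := by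
  obtain ⟨lam, hl, φ, h0, hφ, hkφ⟩ := h.exLam k hk
  refine ⟨lam, hl, fun u v hu t => (h.anti hodd h0 hφ hkφ hu t).1, fun u v hu hne => ?_⟩
  have hT := h.Tp
  have hne' : ¬ (u 0 = 0 ∧ v 0 = 0) := by
    rintro ⟨h1, h2⟩
    apply hne
    have := (h.uniqL hu (hu.smul 0) 0 (by simp [h1]) (by simp [h2])).1
    rw [this]; ext t; simp
  obtain ⟨r, ψ, hψ, hr, hus, -⟩ := hu.toP h hne'
  have a1 := h.advance hodd h0 hφ hkφ hψ
  have a2 := h.advance hodd h0 hφ hkφ ((hψ.shift h).shift h)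
  simp only [zero_add] at a2
  have a3 : ψ (T + T + (T + T)) = ψ 0 + (2 * k : ℕ) * π := by
    rw [show T + T + (T + T) = T + T + T + T by ring, a2, a1]; push_cast; ring
  rw [← count_zeros hψ.cont (h.monoP hl hψ) (T + T + (T + T)) (by linarith) (2 * k) a3]
  congr 1
  ext t
  simp [hus, (hr t).ne']


lemma hasDerivAt_fst_aux {f : ℝ → ℝ × ℝ} {f' : ℝ × ℝ} {t : ℝ} (h : HasDerivAt f f' t) :
    HasDerivAt (fun t => (f t).1) f'.1 t := by
  simpa using! (ContinuousLinearMap.fst ℝ ℝ ℝ).hasFDerivAt.comp_hasDerivAt t h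

lemma hasDerivAt_snd_aux {f : ℝ → ℝ × ℝ} {f' : ℝ × ℝ} {t : ℝ} (h : HasDerivAt f f' t) :
    HasDerivAt (fun t => (f t).2) f'.2 t := by
  simpa using! (ContinuousLinearMap.snd ℝ ℝ ℝ).hasFDerivAt.comp_hasDerivAt t h

lemma per_bounds (f : ℝ → ℝ) (hf : Continuous f) (T : ℝ) (hT : 0 < T) (hper : ∀ t, f (t + T) = f t)
    (hpos : ∀ t, 0 < f t) : ∃ m M, 0 < m ∧ (∀ t, m ≤ f t) ∧ ∀ t, f t ≤ M := by
  have hne : (Icc (0:ℝ) T).Nonempty := nonempty_Icc.mpr hT.le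
  obtain ⟨x, -, hx⟩ := isCompact_Icc.exists_isMinOn hne hf.continuousOn
  obtain ⟨y, -, hy⟩ := isCompact_Icc.exists_isMaxOn hne hf.continuousOn
  have hp : Function.Periodic f T := hper
  refine ⟨f x, f y, hpos x, fun t => ?_, fun t => ?_⟩
  · obtain ⟨s, hs, hst⟩ := hp.exists_mem_Ico₀ hT t
    rw [hst]; exact hx (Ico_subset_Icc_self hs)
  · obtain ⟨s, hs, hst⟩ := hp.exists_mem_Ico₀ hT t
    rw [hst]; exact hy (Ico_subset_Icc_self hs)

lemma contDiff_det2 {f g : ℝ → ℝ × ℝ} (hf : ContDiff ℝ (⊤ : ℕ∞) f) (hg : ContDiff ℝ (⊤ : ℕ∞) g) :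
    ContDiff ℝ (⊤ : ℕ∞) (fun t => det2 (f t) (g t)) := by
  unfold det2
  exact (hf.fst.mul hg.snd).sub (hf.snd.mul hg.fst)

lemma deriv_rot {f : ℝ → ℝ × ℝ} (hf : Differentiable ℝ f) {T : ℝ}
    (hrot : ∀ θ, f (θ + T) = (-(f θ).2, (f θ).1)) (θ : ℝ) :
    deriv f (θ + T) = (-(deriv f θ).2, (deriv f θ).1) := by
  have h1 : HasDerivAt (fun t => f (t + T)) (deriv f (θ + T)) θ :=
    (hf (θ + T)).hasDerivAt.comp_add_const θ T
  have h0 := (hf θ).hasDerivAt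
  have h2 : HasDerivAt (fun t => (-(f t).2, (f t).1)) (-(deriv f θ).2, (deriv f θ).1) θ :=
    (HasDerivAt.neg (hasDerivAt_snd_aux h0)).prodMk (hasDerivAt_fst_aux h0)
  have : (fun t => f (t + T)) = fun t => (-(f t).2, (f t).1) := funext hrot
  rw [this] at h1
  exact h1.unique h2

lemma det2_rot (x y : ℝ × ℝ) : det2 (-x.2, x.1) (-y.2, y.1) = det2 x y := by
  simp only [det2]; ring

/-- if the unit circle is invariant under the rotation by `π/2`
(a linear map `B` with `B² = -Id`), then for every odd `k ≥ 1` there is `λ > 0`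
such that every solution of the cycloid equation with parameter `λ` is
anti-`π`-periodic (hence `2π`-periodic; `λ` is a double eigenvalue), and every
nonzero solution has exactly `2k` distinct zeros in `[0, 2π)`. -/
theorem stmt_17 (p : ℝ → ℝ × ℝ) (hP : IsUnitCircle p)
    (hrot : ∀ θ, p (θ + π / 2) = (-(p θ).2, (p θ).1))
    (k : ℕ) (hodd : Odd k) (hk : 1 ≤ k) :
    ∃ lam : ℝ, 0 < lam ∧
      (∀ u : ℝ → ℝ, IsCycloidSol p lam u → ∀ θ, u (θ + π) = -u θ) ∧
      (∀ u : ℝ → ℝ, IsCycloidSol p lam u → u ≠ 0 →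
        {θ ∈ Set.Ico (0:ℝ) (2 * π) | u θ = 0}.ncard = 2 * k) := by
  obtain ⟨hp, -, hapos, hDpos⟩ := hP
  have hp1 : ContDiff ℝ (⊤ : ℕ∞) (deriv p) := (contDiff_infty_iff_deriv.mp hp).2
  have hp2 : ContDiff ℝ (⊤ : ℕ∞) (deriv (deriv p)) := (contDiff_infty_iff_deriv.mp hp1).2
  set a : ℝ → ℝ := fun t => det2 (p t) (deriv p t) with ha
  set b : ℝ → ℝ := fun t => det2 (dualQ p t) (deriv (dualQ p) t) with hb
  have hac : ContDiff ℝ (⊤ : ℕ∞) a := contDiff_det2 hp hp1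
  have hbD : ∀ t, b t = det2 (deriv p t) (deriv (deriv p) t) / a t ^ 2 := by
    intro t
    have hat : a t ≠ 0 := (hapos t).ne'
    have d1 : HasDerivAt a (deriv a t) t := (hac.differentiable (by simp) t).hasDerivAt
    have d2 : HasDerivAt (deriv p) (deriv (deriv p) t) t :=
      (hp1.differentiable (by simp) t).hasDerivAt
    have d3 : HasDerivAt (dualQ p) _ t := (d1.inv hat).smul d2
    simp only [hb]
    rw [d3.deriv]
    simp only [dualQ, det2, Prod.fst_add, Prod.snd_add, Prod.smul_fst, Prod.smul_snd, smul_eq_mul,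
      Pi.inv_apply]
    change _ = _ / (det2 (p t) (deriv p t)) ^ 2
    simp only [ha, det2] at hat ⊢
    field_simp
    ring
  have hbc : ContDiff ℝ (⊤ : ℕ∞) b := by
    rw [show b = fun t => det2 (deriv p t) (deriv (deriv p) t) / a t ^ 2 from funext hbD]
    exact (contDiff_det2 hp1 hp2).div (hac.pow 2) (fun t => pow_ne_zero 2 (hapos t).ne')
  have hbpos : ∀ t, 0 < b t := fun t => by
    rw [hbD]; exact div_pos (hDpos t) (pow_pos (hapos t) 2)
  have hr1 := deriv_rot (hp.differentiable (by simp)) hrot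
  have hr2 := deriv_rot (hp1.differentiable (by simp)) hr1
  have hpa : ∀ t, a (t + π / 2) = a t := fun t => by
    simp only [ha, hrot, hr1, det2_rot]
  have hpb : ∀ t, b (t + π / 2) = b t := fun t => by
    rw [hbD, hbD, hpa, hr1, hr2, det2_rot]
  have hT : 0 < π / 2 := by positivity
  obtain ⟨a0, A, a0p, a0a, aA⟩ := per_bounds a hac.continuous _ hT hpa hapos
  obtain ⟨b0, B, b0p, b0b, bB⟩ := per_bounds b hbc.continuous _ hT hpb hbpos
  have hco : Coef a b (π / 2) a0 b0 (max A B) :=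
    { ca := hac.continuous, cb := hbc.continuous, a0p := a0p, b0p := b0p, a0a := a0a, b0b := b0b
      aC := fun t => (aA t).trans (le_max_left _ _), bC := fun t => (bB t).trans (le_max_right _ _)
      Tp := hT, pa := hpa, pb := hpb }
  obtain ⟨lam, hl, h1, h2⟩ := hco.main k hodd hk
  have hsol : ∀ u, IsCycloidSol p lam u → LSol a b lam u (fun t => deriv u t / b t) := by
    rintro u ⟨hu, he⟩ t
    have hbt := (hbpos t).ne'
    have hat : a t ≠ 0 := (hapos t).ne'
    constructor
    · refine ((hu.differentiable (by simp)) t).hasDerivAt.congr_deriv ?_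
      field_simp
    · have hu1 : Differentiable ℝ (deriv u) := by
        have : ContDiff ℝ (1 + 1) u := by simpa [one_add_one_eq_two] using hu
        exact (contDiff_succ_iff_deriv.mp this).2.2.differentiable (by simp)
      have hd : DifferentiableAt ℝ (fun t => deriv u t / b t) t :=
        (hu1 t).div (hbc.differentiable (by simp) t) hbt
      refine hd.hasDerivAt.congr_deriv ?_
      have := he t
      change (a t)⁻¹ * deriv (fun t => deriv u t / b t) t = _ at this
      rw [inv_mul_eq_iff_eq_mul₀ hat] at this
      rw [this]; ring
  refine ⟨lam, hl, fun u hu θ => ?_, fun u hu hne => ?_⟩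
  · have := h1 u _ (hsol u hu) θ
    rwa [add_halves] at this
  · have := h2 u _ (hsol u hu) hne
    rwa [add_halves, ← two_mul] at this
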